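/- arXiv:2005.05158 — 3 statements merged into one kernel-verified Lean document; each statement's English description precedes it below -/
import Mathlib

section
/- Let (Ω,𝔉,ℙ) be a probability space with a filtration (𝔉_k)_{k∈ℕ}, let (w_k)_{k∈ℕ} be a sequence of [0,∞)-valued random variables with w_k 𝔉_k-measurable for every k, and let (γ_k)_{k∈ℕ} be a sequence of nonnegative real numbers with Σ_k γ_k = ∞. If Σ_k γ_k w_k < ∞ ℙ-almost surely, then ℙ-almost surely the set {k ∈ ℕ : w_k ≤ Γ_k^{-1}} is infinite, where Γ_k := Σ_{n=1}^{k} γ_n; in particular liminf_{k→∞} w_k = 0 ℙ-almost surely. -/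
/-!
The statement is pathwise: it is proved for each `ω` with `∑ γ k * w k ω < ∞`. Write
`Γ k = ∑_{n=1}^k γ n`, which tends to infinity. If only finitely many `k` satisfied
`w k ≤ (Γ k)⁻¹`, then `γ k * w k ≥ γ k / Γ k` for all large `k`. But `∑ γ k / Γ k` diverges
(Abel–Dini): since `Γ` is nondecreasing, its terms between `M` and `K` add up to at least
`(Γ K - Γ M) / Γ K`, which exceeds `1/2` once `Γ K ≥ 2 Γ M`, so the tails do not vanish. Hence
`w k ≤ (Γ k)⁻¹` infinitely often, and `(Γ k)⁻¹ → 0` gives `liminf w k = 0`.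
-/

open MeasureTheory Filter

lemma tendsto_sum_Icc_one_atTop {γ : ℕ → ℝ} (hγ : ∀ k, 0 ≤ γ k) (hdiv : ¬ Summable γ) :
    Tendsto (fun k => ∑ n ∈ Finset.Icc 1 k, γ n) atTop atTop := by
  have h := (not_summable_iff_tendsto_nat_atTop_of_nonneg hγ).1 hdiv
  have h1 := tendsto_atTop_add_const_right atTop (-γ 0) ((tendsto_add_atTop_iff_nat 1).2 h)
  refine h1.congr fun k => ?_
  induction k with
  | zero => simp
  | succ k ih =>
    rw [Finset.sum_Icc_succ_top (by omega), ← ih, Finset.sum_range_succ _ (k + 1)]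
    ring

/-- The pathwise form of the first claim, for a deterministic sequence `w`. -/
lemma frequently_le_inv_sum {γ w : ℕ → ℝ} (hγ : ∀ k, 0 ≤ γ k) (hdiv : ¬ Summable γ)
    (hs : Summable fun k => γ k * w k) :
    ∃ᶠ k in atTop, w k ≤ (∑ n ∈ Finset.Icc 1 k, γ n)⁻¹ := by
  intro hev
  have hΓ := tendsto_sum_Icc_one_atTop hγ hdiv
  obtain ⟨N, hN⟩ := eventually_atTop.1 (hev.and (hΓ.eventually_gt_atTop 0))
  obtain ⟨s, hs⟩ := summable_iff_vanishing_norm.1 hs (1 / 2) (by norm_num)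
  obtain ⟨B, hB⟩ := s.exists_nat_subset_range
  set M := max N B with hM
  obtain ⟨K, hK2, hMK⟩ := ((hΓ.eventually_ge_atTop
    (2 * ∑ n ∈ Finset.Icc 1 M, γ n)).and (eventually_ge_atTop M)).exists
  have hdisj : Disjoint (Finset.Ioc M K) s := by
    rw [Finset.disjoint_left]
    intro a ha has
    have h1 := Finset.mem_range.1 (hB has)
    have h2 := (Finset.mem_Ioc.1 ha).1
    omega
  have hlt := (le_abs_self _).trans_lt (hs _ hdisj)
  have hKpos := (hN K (by omega)).2
  have hsplit : ∑ n ∈ Finset.Icc 1 K, γ n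
      = ∑ n ∈ Finset.Icc 1 M, γ n + ∑ n ∈ Finset.Ioc M K, γ n := by
    rw [← Finset.sum_union]
    · congr 1
      ext a
      simp only [Finset.mem_Icc, Finset.mem_union, Finset.mem_Ioc]
      omega
    · rw [Finset.disjoint_left]
      intro a h1 h2
      simp only [Finset.mem_Icc, Finset.mem_Ioc] at h1 h2
      omega
  have hge : (∑ n ∈ Finset.Ioc M K, γ n) * (∑ n ∈ Finset.Icc 1 K, γ n)⁻¹
      ≤ ∑ k ∈ Finset.Ioc M K, γ k * w k := by
    rw [Finset.sum_mul]
    refine Finset.sum_le_sum fun k hk => mul_le_mul_of_nonneg_left ?_ (hγ k)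
    have hk' := Finset.mem_Ioc.1 hk
    obtain ⟨h1, h2⟩ := hN k (by omega)
    refine le_trans ?_ (not_le.1 h1).le
    exact inv_anti₀ h2 (Finset.sum_le_sum_of_subset_of_nonneg
      (Finset.Icc_subset_Icc_right hk'.2) fun i _ _ => hγ i)
  have hhalf : 1 / 2 ≤ (∑ n ∈ Finset.Ioc M K, γ n) * (∑ n ∈ Finset.Icc 1 K, γ n)⁻¹ := by
    rw [← div_eq_mul_inv, le_div_iff₀ hKpos]
    linarith
  linarith

/-- cf. Lemma 2.2(i) of the paper / Barty et al.:
If `(w k)` is a nonnegative adapted sequence, `(γ k)` nonnegative with `Σ γ k = ∞`,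
and `Σ γ k * w k < ∞` almost surely, then almost surely `w k ≤ Γ k⁻¹` for infinitely
many `k`, where `Γ k = Σ_{n=1}^k γ n`; in particular `liminf w k = 0` almost surely. -/
theorem barty_subsequence
    {Ω : Type*} [MeasurableSpace Ω] (P : Measure Ω) [IsProbabilityMeasure P]
    (ℱ : Filtration ℕ (by infer_instance : MeasurableSpace Ω))
    (w : ℕ → Ω → ℝ)
    (hw_nonneg : ∀ k ω, 0 ≤ w k ω)
    (hw_adapted : ∀ k, Measurable[ℱ k] (w k))
    (γ : ℕ → ℝ) (hγ_nonneg : ∀ k, 0 ≤ γ k)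
    (hγ_div : ¬ Summable γ)
    (hsum : ∀ᵐ ω ∂P, Summable (fun k => γ k * w k ω)) :
    ∀ᵐ ω ∂P,
      {k : ℕ | w k ω ≤ (∑ n ∈ Finset.Icc 1 k, γ n)⁻¹}.Infinite ∧
      Filter.liminf (fun k => w k ω) Filter.atTop = 0 := by
  filter_upwards [hsum] with ω hω
  have hfreq := frequently_le_inv_sum hγ_nonneg hγ_div hω
  have hinv := (tendsto_sum_Icc_one_atTop hγ_nonneg hγ_div).inv_tendsto_atTop
  have hε : ∀ ε : ℝ, 0 < ε → ∃ᶠ k in atTop, w k ω ≤ ε := fun ε hpos =>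
    (hfreq.and_eventually (hinv.eventually_le_const hpos)).mono fun k hk => hk.1.trans hk.2
  have hbdd : IsBoundedUnder (· ≥ ·) atTop fun k => w k ω :=
    isBoundedUnder_of ⟨0, fun k => hw_nonneg k ω⟩
  refine ⟨Nat.frequently_atTop_iff_infinite.1 hfreq, le_antisymm ?_ ?_⟩
  · exact le_of_forall_pos_le_add fun ε hpos => by
      rw [zero_add]
      exact liminf_le_of_frequently_le (hε ε hpos) hbdd
  -- In `ℝ` this bound needs the sequence not to tend to infinity, which the case `ε = 1` provides.
  · exact le_liminf_of_le (IsCoboundedUnder.of_frequently_le (hε 1 one_pos))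
      (Eventually.of_forall fun k => hw_nonneg k ω)
end

section
/- For every k ≥ 2n−1, the sweeping gradient estimate satisfies ‖∇f(x_{k+1}) − ĝ_{k+1}‖ ≤ C · ω(γ_{k+2−2n} d_C), where C := (n(n−1) + (n−1)(2n−1))/n. -/
/-!
For `K ≥ n` the estimate `ĝ_K` is the average of `∇f_{[j]}(x_j)` over the window of the last `n`
indices `K - n < j ≤ K` (`ghat_window`): the recursion adds the newest term and drops the oldest.
Over any such window `[j]` runs through `{1,…,n}` once, so `∇f(x_K)` is the average of
`∇f_{[j]}(x_K)` over the same window (`sum_window_periodic`). Each difference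
`∇f_{[j]}(x_K) - ∇f_{[j]}(x_j)` telescopes over at most `n - 1` steps of length at most
`γ_{K+1-2n} d_C`, so the error is at most `(n - 1) ω(γ_{K+1-2n} d_C)`
(`norm_sub_le_steps`). The constant in the theorem is `(n - 1)(3n - 1)/n ≥ n - 1`.
-/

open Filter

/-- The index `[k] ∈ {1,…,n}` congruent to `k` modulo `n`
(with `[k] = n` when `n ∣ k`). -/
def sweepIdx (n k : ℕ) : ℕ := if k % n = 0 then n else k % n

lemma sweepIdx_add_self (n k : ℕ) : sweepIdx n (k + n) = sweepIdx n k := by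
  simp [sweepIdx]

lemma sweepIdx_of_mem {n k : ℕ} (hk : 1 ≤ k) (hkn : k ≤ n) : sweepIdx n k = k := by
  unfold sweepIdx
  rcases hkn.eq_or_lt with rfl | h
  · simp
  · rw [Nat.mod_eq_of_lt h, if_neg (by omega)]

lemma sweepIdx_mem {n : ℕ} (hn : 0 < n) (k : ℕ) : sweepIdx n k ∈ Finset.Icc 1 n := by
  have := Nat.mod_lt k hn
  unfold sweepIdx
  rw [Finset.mem_Icc]
  split_ifs <;> omega

lemma sum_window_succ {H : Type*} [AddCommGroup H] (a : ℕ → H) (n m : ℕ) :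
    ∑ j ∈ Finset.range n, a (m + 1 + 1 + j)
      = ∑ j ∈ Finset.range n, a (m + 1 + j) + (a (m + 1 + n) - a (m + 1)) := by
  have h := Finset.sum_range_succ' (fun j => a (m + 1 + j)) n
  rw [Finset.sum_range_succ] at h
  have h2 : ∑ j ∈ Finset.range n, a (m + 1 + 1 + j)
      = ∑ j ∈ Finset.range n, a (m + 1 + (j + 1)) :=
    Finset.sum_congr rfl fun j _ => by rw [add_right_comm (m + 1) 1 j, add_assoc (m + 1)]
  rw [h2, ← add_sub_assoc, h]
  simp

lemma sum_window_zero {H : Type*} [AddCommGroup H] (F : ℕ → ℕ → H) (n : ℕ) :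
    ∑ j ∈ Finset.range n, F (sweepIdx n (0 + 1 + j)) (0 + 1 + j)
      = ∑ i ∈ Finset.Icc 1 n, F i i := by
  rw [← Finset.Ico_add_one_right_eq_Icc, Finset.sum_Ico_eq_sum_range]
  refine Finset.sum_congr (by simp) fun j hj => ?_
  rw [Finset.mem_range] at hj
  rw [sweepIdx_of_mem (by omega) (by omega), zero_add]

/-- Over any `n` consecutive indices `j`, the index `[j]` visits each element of `{1,…,n}` once. -/
lemma sum_window_periodic {H : Type*} [AddCommGroup H] (F : ℕ → H) (n m : ℕ) :
    ∑ j ∈ Finset.range n, F (sweepIdx n (m + 1 + j)) = ∑ i ∈ Finset.Icc 1 n, F i := by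
  induction m with
  | zero => exact sum_window_zero (fun i _ => F i) n
  | succ m ih =>
    rw [sum_window_succ (fun k => F (sweepIdx n k)), ih, sweepIdx_add_self, sub_self, add_zero]

/-- The estimate at time `n + m` averages the component gradients over the window
`m < j ≤ m + n`, each taken at the iterate where it was last evaluated. -/
lemma ghat_window {H : Type*} [NormedAddCommGroup H] [InnerProductSpace ℝ H]
    {n : ℕ} (hn : 1 < n) (f' : ℕ → H → H) (x ghat : ℕ → H)
    (hg_low : ∀ k, 1 ≤ k → k ≤ n →
      ghat k = (n : ℝ)⁻¹ • ∑ i ∈ Finset.Icc 1 k, f' i (x i))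
    (hg_rec : ∀ k, n + 1 ≤ k →
      ghat k = ghat (k-1)
        + (n : ℝ)⁻¹ • (f' (sweepIdx n k) (x k) - f' (sweepIdx n k) (x (k-n)))) (m : ℕ) :
    ghat (m + n)
      = (n : ℝ)⁻¹ • ∑ j ∈ Finset.range n, f' (sweepIdx n (m + 1 + j)) (x (m + 1 + j)) := by
  induction m with
  | zero =>
    rw [sum_window_zero (fun i k => f' i (x k)), zero_add, hg_low n (by omega) le_rfl]
  | succ m ih =>
    rw [sum_window_succ (fun k => f' (sweepIdx n k) (x k)), hg_rec (m + 1 + n) (by omega),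
      show m + 1 + n - 1 = m + n by omega, ih, Nat.add_sub_cancel, sweepIdx_add_self, smul_add]

/-- Telescoping an `ω`-smooth map along `p` consecutive iterates: every step has length at most
`γ_q d_C` once its index is at least `q`. -/
lemma norm_sub_le_steps {H : Type*} [NormedAddCommGroup H] [InnerProductSpace ℝ H]
    (g : H → H) (w : ℝ → ℝ) (hwmono : ∀ s t : ℝ, 0 ≤ s → s ≤ t → w s ≤ w t)
    (hg : ∀ x y : H, ‖g x - g y‖ ≤ w ‖x - y‖)
    (γ : ℕ → ℝ) (hγpos : ∀ k, 0 < γ k) (hγanti : Antitone γ)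
    (x shat : ℕ → H) (dC : ℝ)
    (hrec : ∀ k, x (k+1) = x k + γ k • (shat k - x k))
    (hstep : ∀ k, ‖shat k - x k‖ ≤ dC) {q l : ℕ} (hql : q ≤ l) (p : ℕ) :
    ‖g (x (l + p)) - g (x l)‖ ≤ p * w (γ q * dC) := by
  induction p with
  | zero => simp
  | succ p ih =>
    have hdist : ‖x (l + p + 1) - x (l + p)‖ ≤ γ q * dC := by
      rw [hrec, add_sub_cancel_left, norm_smul, Real.norm_of_nonneg (hγpos _).le]
      exact mul_le_mul (hγanti (by omega)) (hstep _) (norm_nonneg _) (hγpos _).le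
    have h1 : ‖g (x (l + p + 1)) - g (x (l + p))‖ ≤ w (γ q * dC) :=
      (hg _ _).trans (hwmono _ _ (norm_nonneg _) hdist)
    have h2 := norm_sub_le_norm_sub_add_norm_sub
      (g (x (l + p + 1))) (g (x (l + p))) (g (x l))
    rw [← add_assoc]
    push_cast
    linarith

lemma gradient_average {H : Type*} [NormedAddCommGroup H] [InnerProductSpace ℝ H]
    [CompleteSpace H] {n : ℕ} {f : ℕ → H → ℝ} {f' : ℕ → H → H} {y G : H}
    (hgrad : ∀ i ∈ Finset.Icc 1 n, HasGradientAt (f i) (f' i y) y)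
    (hG : HasGradientAt (fun v => (n : ℝ)⁻¹ * ∑ i ∈ Finset.Icc 1 n, f i v) G y) :
    G = (n : ℝ)⁻¹ • ∑ i ∈ Finset.Icc 1 n, f' i y := by
  refine hG.unique ?_
  rw [hasGradientAt_iff_hasFDerivAt]
  have h := (HasFDerivAt.fun_sum fun i hi => (hgrad i hi).hasFDerivAt).const_mul (n : ℝ)⁻¹
  simpa using h

/-- Lemma 6.1 of the paper: bound on the sweeping gradient error:
for `k ≥ 2n − 1`, `‖∇f(x_{k+1}) − ĝ_{k+1}‖ ≤ C ω(γ_{k+2−2n} d_C)` with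
`C = (n(n−1) + (n−1)(2n−1))/n`. -/
theorem sweeping_gradient_error_bound
    {H : Type*} [NormedAddCommGroup H] [InnerProductSpace ℝ H] [CompleteSpace H]
    (n : ℕ) (hn : 1 < n)
    (f : ℕ → H → ℝ) (f' : ℕ → H → H)
    (hgrad : ∀ i ∈ Finset.Icc 1 n, ∀ x : H, HasGradientAt (f i) (f' i x) x)
    (w : ℝ → ℝ) (hwmono : ∀ s t : ℝ, 0 ≤ s → s ≤ t → w s ≤ w t)
    (hsmooth : ∀ i ∈ Finset.Icc 1 n, ∀ x y : H, ‖f' i x - f' i y‖ ≤ w ‖x - y‖)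
    -- the gradient of f = (1/n) Σ f_i
    (gradf : H → H)
    (hgradf : ∀ y : H,
      HasGradientAt (fun v => (n : ℝ)⁻¹ * ∑ i ∈ Finset.Icc 1 n, f i v) (gradf y) y)
    -- step sizes and iterates
    (γ : ℕ → ℝ) (hγpos : ∀ k, 0 < γ k) (hγanti : Antitone γ)
    (x shat : ℕ → H) (dC : ℝ) (hdCpos : 0 < dC)
    (hrec : ∀ k, x (k+1) = x k + γ k • (shat k - x k))
    (hstep : ∀ k, ‖shat k - x k‖ ≤ dC)
    -- the sweeping gradient estimates
    (ghat : ℕ → H)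
    (hg_low : ∀ k, 1 ≤ k → k ≤ n →
      ghat k = (n : ℝ)⁻¹ • ∑ i ∈ Finset.Icc 1 k, f' i (x i))
    (hg_rec : ∀ k, n + 1 ≤ k →
      ghat k = ghat (k-1)
        + (n : ℝ)⁻¹ • (f' (sweepIdx n k) (x k) - f' (sweepIdx n k) (x (k-n)))) :
    ∀ k, 2 * n - 1 ≤ k →
      ‖gradf (x (k+1)) - ghat (k+1)‖
        ≤ (((n : ℝ) * ((n : ℝ) - 1) + ((n : ℝ) - 1) * (2 * (n : ℝ) - 1)) / (n : ℝ))
          * w (γ (k + 2 - 2 * n) * dC) := by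
  intro k hk
  have hn0 : (0 : ℝ) < n := by exact_mod_cast (by omega : 0 < n)
  have hn1 : (1 : ℝ) < n := by exact_mod_cast hn
  obtain ⟨m, hm⟩ : ∃ m, k + 1 = m + n := ⟨k + 1 - n, by omega⟩
  set q := k + 2 - 2 * n with hq
  have hw0 : 0 ≤ w (γ q * dC) := by
    have h0 := hsmooth 1 (Finset.mem_Icc.2 ⟨le_rfl, hn.le⟩) 0 0
    rw [sub_self, sub_self, norm_zero] at h0
    exact h0.trans (hwmono _ _ le_rfl (mul_pos (hγpos _) hdCpos).le)
  rw [hm, gradient_average (fun i hi => hgrad i hi _) (hgradf (x (m + n))),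
    ← sum_window_periodic (fun i => f' i (x (m + n))) n m,
    ghat_window hn f' x ghat hg_low hg_rec m, ← smul_sub, ← Finset.sum_sub_distrib, norm_smul,
    norm_inv, Real.norm_of_nonneg hn0.le]
  have hterm : ∀ j ∈ Finset.range n,
      ‖f' (sweepIdx n (m + 1 + j)) (x (m + n))
        - f' (sweepIdx n (m + 1 + j)) (x (m + 1 + j))‖ ≤ ((n : ℝ) - 1) * w (γ q * dC) := by
    intro j hj
    rw [Finset.mem_range] at hj
    have h := norm_sub_le_steps (f' (sweepIdx n (m + 1 + j))) w hwmono
      (hsmooth _ (sweepIdx_mem (by omega) _)) γ hγpos hγanti x shat dC hrec hstep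
      (q := q) (l := m + 1 + j) (by omega) (n - 1 - j)
    rw [show m + 1 + j + (n - 1 - j) = m + n by omega] at h
    refine h.trans (mul_le_mul_of_nonneg_right ?_ hw0)
    rw [← Nat.cast_pred (by omega : 0 < n)]
    exact_mod_cast Nat.sub_le _ _
  have hsum := norm_sum_le_of_le _ hterm
  rw [Finset.sum_const, Finset.card_range, nsmul_eq_mul] at hsum
  calc _ ≤ (n : ℝ)⁻¹ * (n * (((n : ℝ) - 1) * w (γ q * dC))) :=
        mul_le_mul_of_nonneg_left hsum (inv_nonneg.2 hn0.le)
    _ = ((n : ℝ) - 1) * w (γ q * dC) := by field_simp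
    _ ≤ _ := by
        refine mul_le_mul_of_nonneg_right ?_ hw0
        rw [le_div_iff₀ hn0]
        nlinarith
end

section
/- Let (u_k) be a sequence of nonnegative reals, (γ_k) a sequence in (0,1], and c, d > 0 and real exponents s, t with 0 < s < min{1, t}. Assume: u_{k+1} ≤ (1 − c γ_k^s) u_k + d γ_k^t for all k, with c γ_k^s < 1 for all k; Σ_k γ_k^s = ∞; and there is a sequence (v_k) with v_k/γ_k^s → 0 such that γ_k/γ_{k+1} ≤ 1 + v_k for all sufficiently large k. Then limsup_{k→∞} γ_k^{s−t} u_k ≤ d/c; equivalently, u_k ≤ (d/c) γ_k^{t−s} + o(γ_k^{t−s}) as k → ∞. -/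
/-!
Put `w k = γ k ^ (s - t) * u k`, `a k = γ k ^ s`, and fix `L > d / c`. Multiplying the recursion by
`γ (k+1) ^ (s - t)` produces the extra factor `(γ k / γ (k+1)) ^ (t - s)`. Since `v k = o(a k)`,
this factor is eventually at most `exp (δ a k) ≤ 1 / (1 - δ a k)`, for any prescribed `δ ∈ (0, c)`
(`ratio_rpow_mul_le`). With `δ = c - d / L`, which lies in `(0, c)`, the constant terms cancel and
`(1 - δ a k) (w (k+1) - L) ≤ (1 - c a k) (w k - L)`, so that the positive part of `w k - L`
contracts by the factor `1 - (c - δ) a k`. As `∑ a k = ∞`, this positive part tends to zero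
(`tendsto_zero_of_contraction`), whence `limsup w ≤ L`.
-/

open Filter

/-- A nonnegative sequence contracting by `1 - κ a k` with `∑ a k = ∞` tends to zero: the sequence
`x k * exp (κ ∑_{i<k} a i)` is eventually nonincreasing, hence bounded. -/
lemma tendsto_zero_of_contraction (x a : ℕ → ℝ) (κ : ℝ) (hκ : 0 < κ) (hx : ∀ k, 0 ≤ x k)
    (ha : ∀ k, 0 ≤ a k) (hdiv : ¬ Summable a)
    (h : ∀ᶠ k in atTop, x (k + 1) ≤ (1 - κ * a k) * x k) :
    Tendsto x atTop (nhds 0) := by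
  obtain ⟨N, hN⟩ := eventually_atTop.1 h
  set S : ℕ → ℝ := fun k => ∑ i ∈ Finset.range k, a i with hS
  have hStop : Tendsto S atTop atTop :=
    (not_summable_iff_tendsto_nat_atTop_of_nonneg ha).1 hdiv
  have hbound : ∀ k, N ≤ k → x k * Real.exp (κ * S k) ≤ x N * Real.exp (κ * S N) := by
    intro k hk
    induction k, hk using Nat.le_induction with
    | base => exact le_rfl
    | succ k hk ih =>
      refine le_trans ?_ ih
      have hSk : S (k + 1) = S k + a k := Finset.sum_range_succ a k
      have h1 : x (k + 1) ≤ Real.exp (-(κ * a k)) * x k :=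
        (hN k hk).trans (mul_le_mul_of_nonneg_right (Real.one_sub_le_exp_neg _) (hx k))
      calc x (k + 1) * Real.exp (κ * S (k + 1))
          ≤ (Real.exp (-(κ * a k)) * x k) * Real.exp (κ * S (k + 1)) :=
            mul_le_mul_of_nonneg_right h1 (Real.exp_pos _).le
        _ = x k * (Real.exp (-(κ * a k)) * Real.exp (κ * S (k + 1))) := by ring
        _ = x k * Real.exp (κ * S k) := by
            rw [← Real.exp_add, hSk]
            congr 2
            ring
  have hlim : Tendsto (fun k => x N * Real.exp (κ * S N) * Real.exp (-(κ * S k))) atTop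
      (nhds 0) := by
    have h2 := (Real.tendsto_exp_neg_atTop_nhds_zero.comp
      (hStop.const_mul_atTop hκ)).const_mul (x N * Real.exp (κ * S N))
    simpa using h2
  refine squeeze_zero' (Eventually.of_forall hx) ?_ hlim
  filter_upwards [eventually_ge_atTop N] with k hk
  calc x k = x k * Real.exp (κ * S k) * Real.exp (-(κ * S k)) := by
        rw [mul_assoc, ← Real.exp_add]
        simp
    _ ≤ _ := mul_le_mul_of_nonneg_right (hbound k hk) (Real.exp_pos _).le

/-- The bound `r ^ p ≤ 1 / (1 - δ a)` for a ratio `r` close to one, in division-free form. -/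
lemma ratio_rpow_mul_le (r p δ a : ℝ) (hr : 0 ≤ r) (hp : 0 < p) (hδ : 0 ≤ 1 - δ * a)
    (h : r ≤ 1 + δ / p * a) : r ^ p * (1 - δ * a) ≤ 1 := by
  have h1 : r ≤ Real.exp (δ / p * a) := by
    linarith [Real.add_one_le_exp (δ / p * a)]
  have h2 : r ^ p ≤ Real.exp (δ * a) := by
    refine (Real.rpow_le_rpow hr h1 hp.le).trans_eq ?_
    rw [← Real.exp_mul]
    congr 1
    field_simp
  calc r ^ p * (1 - δ * a) ≤ Real.exp (δ * a) * Real.exp (-(δ * a)) :=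
        mul_le_mul h2 (Real.one_sub_le_exp_neg _) hδ (Real.exp_pos _).le
    _ = 1 := by
        rw [← Real.exp_add]
        simp

/-- Lemma A.1 of the paper: if a nonnegative sequence `(u k)`
satisfies `u (k+1) ≤ (1 − c γ k ^ s) u k + d γ k ^ t` with `0 < s < min{1, t}`,
`c γ k ^ s < 1`, `Σ γ k ^ s = ∞`, and `γ k / γ (k+1) ≤ 1 + v k` eventually with
`v k / γ k ^ s → 0`, then `limsup γ k ^ (s − t) * u k ≤ d / c`, i.e.
`u k ≤ (d/c) γ k ^ (t−s) + o(γ k ^ (t−s))`. -/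
theorem rate_recursion_lemma
    (u γ : ℕ → ℝ)
    (hu : ∀ k, 0 ≤ u k)
    (hγ : ∀ k, γ k ∈ Set.Ioc (0:ℝ) 1)
    (c d s t : ℝ) (hc : 0 < c) (hd : 0 < d)
    (hs0 : 0 < s) (hs1 : s < 1) (hst : s < t)
    (hrec : ∀ k, u (k+1) ≤ (1 - c * γ k ^ s) * u k + d * γ k ^ t)
    (hsmall : ∀ k, c * γ k ^ s < 1)
    (hdiv : ¬ Summable (fun k => γ k ^ s))
    (v : ℕ → ℝ)
    (hv : Filter.Tendsto (fun k => v k / γ k ^ s) Filter.atTop (nhds 0))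
    (hγv : ∀ᶠ k in Filter.atTop, γ k / γ (k+1) ≤ 1 + v k) :
    Filter.limsup (fun k => γ k ^ (s - t) * u k) Filter.atTop ≤ d / c := by
  have hg : ∀ k, 0 < γ k := fun k => (hγ k).1
  have ha : ∀ k, 0 < γ k ^ s := fun k => Real.rpow_pos_of_pos (hg k) s
  set w : ℕ → ℝ := fun k => γ k ^ (s - t) * u k with hw
  have hw0 : ∀ k, 0 ≤ w k := fun k => mul_nonneg (Real.rpow_nonneg (hg k).le _) (hu k)
  have hp : 0 < t - s := sub_pos.2 hst
  have hdc : 0 < d / c := div_pos hd hc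
  refine le_of_forall_pos_le_add fun ε hε => ?_
  -- Half of `ε` goes into `L`, the other half into the vanishing positive part of `w k - L`.
  obtain ⟨L, hL⟩ : ∃ L, L = d / c + ε / 2 := ⟨_, rfl⟩
  have hL0 : 0 < L := by linarith
  have hdL : d < c * L := by
    have : c * (d / c) = d := by field_simp
    rw [hL, mul_add, this]
    linarith [mul_pos hc hε]
  obtain ⟨δ, hδ⟩ : ∃ δ, δ = c - d / L := ⟨_, rfl⟩
  have hδ0 : 0 < δ := by
    have : d / L < c := (div_lt_iff₀ hL0).2 hdL
    linarith
  have hδc : δ < c := by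
    have : 0 < d / L := div_pos hd hL0
    linarith
  have hδL : δ * L = c * L - d := by
    rw [hδ]
    field_simp
  have hstep : ∀ᶠ k in atTop, max (w (k + 1) - L) 0
      ≤ (1 - (c - δ) * γ k ^ s) * max (w k - L) 0 := by
    have hvsmall : ∀ᶠ k in atTop, v k / γ k ^ s < δ / (t - s) :=
      hv.eventually_lt_const (div_pos hδ0 hp)
    filter_upwards [hvsmall, hγv] with k hvk hgk
    have hak := ha k
    have hca := hsmall k
    have hda : 0 < 1 - δ * γ k ^ s := by
      have := mul_lt_mul_of_pos_right hδc hak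
      linarith
    have hr : γ k / γ (k + 1) ≤ 1 + δ / (t - s) * γ k ^ s := by
      have := (div_lt_iff₀ hak).1 hvk
      linarith
    have hR := ratio_rpow_mul_le _ (t - s) δ (γ k ^ s)
      (div_pos (hg k) (hg (k + 1))).le hp hda.le hr
    have hfac : γ (k + 1) ^ (s - t) = (γ k / γ (k + 1)) ^ (t - s) * γ k ^ (s - t) := by
      rw [Real.div_rpow (hg k).le (hg (k + 1)).le, ← neg_sub t s, Real.rpow_neg (hg k).le,
        Real.rpow_neg (hg (k + 1)).le]
      have := (Real.rpow_pos_of_pos (hg k) (t - s)).ne'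
      field_simp
    have hgt : γ k ^ (s - t) * γ k ^ t = γ k ^ s := by
      rw [← Real.rpow_add (hg k)]
      congr 1
      ring
    set R := (γ k / γ (k + 1)) ^ (t - s) with hRdef
    have hR0 : 0 ≤ R := Real.rpow_nonneg (div_pos (hg k) (hg (k + 1))).le _
    set a := γ k ^ s with hadef
    have hB0 : 0 ≤ (1 - c * a) * w k + d * a :=
      add_nonneg (mul_nonneg (by linarith) (hw0 k)) (mul_pos hd hak).le
    have hw1 : w (k + 1) ≤ R * ((1 - c * a) * w k + d * a) := by
      calc w (k + 1) = γ (k + 1) ^ (s - t) * u (k + 1) := rfl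
        _ ≤ γ (k + 1) ^ (s - t) * ((1 - c * a) * u k + d * γ k ^ t) :=
            mul_le_mul_of_nonneg_left (hrec k) (Real.rpow_nonneg (hg (k + 1)).le _)
        _ = R * ((1 - c * a) * (γ k ^ (s - t) * u k) + d * (γ k ^ (s - t) * γ k ^ t)) := by
            rw [hfac]
            ring
        _ = _ := by rw [hgt]
    have hw2 : (1 - δ * a) * w (k + 1) ≤ (1 - c * a) * w k + d * a := by
      calc (1 - δ * a) * w (k + 1) ≤ (1 - δ * a) * (R * ((1 - c * a) * w k + d * a)) :=
            mul_le_mul_of_nonneg_left hw1 hda.le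
        _ = (R * (1 - δ * a)) * ((1 - c * a) * w k + d * a) := by ring
        _ ≤ 1 * ((1 - c * a) * w k + d * a) := mul_le_mul_of_nonneg_right hR hB0
        _ = _ := one_mul _
    have hm0 : 0 ≤ max (w k - L) 0 := le_max_right _ _
    have hq : 0 ≤ 1 - (c - δ) * a := by
      have := mul_pos hδ0 hak
      linarith
    -- `(1 - δ a) (1 - (c - δ) a) = 1 - c a + δ (c - δ) a²`.
    have hprod : 1 - c * a ≤ (1 - δ * a) * (1 - (c - δ) * a) := by
      have := mul_nonneg (mul_nonneg hδ0.le (sub_pos.2 hδc).le) (sq_nonneg a)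
      linarith
    refine max_le ?_ (mul_nonneg hq hm0)
    refine le_of_mul_le_mul_left ?_ hda
    calc (1 - δ * a) * (w (k + 1) - L) = (1 - δ * a) * w (k + 1) - L + a * (δ * L) := by ring
      _ ≤ (1 - c * a) * (w k - L) := by
          rw [hδL]
          linarith
      _ ≤ (1 - c * a) * max (w k - L) 0 :=
          mul_le_mul_of_nonneg_left (le_max_left _ _) (by linarith)
      _ ≤ (1 - δ * a) * (1 - (c - δ) * a) * max (w k - L) 0 :=
          mul_le_mul_of_nonneg_right hprod hm0
      _ = _ := mul_assoc _ _ _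
  have hlim := tendsto_zero_of_contraction (fun k => max (w k - L) 0) (fun k => γ k ^ s) (c - δ)
    (sub_pos.2 hδc) (fun k => le_max_right _ _) (fun k => (ha k).le) hdiv hstep
  refine limsup_le_of_le
    (isBoundedUnder_of ⟨0, hw0⟩ : IsBoundedUnder (· ≥ ·) atTop w).isCoboundedUnder_le ?_
  filter_upwards [hlim.eventually_lt_const (half_pos hε)] with k hk
  have := (le_max_left (w k - L) 0).trans_lt hk
  linarith
end
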